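/- arXiv:2209.11710 — 6 statements merged into one kernel-verified Lean document; each statement's English description precedes it below -/
import Mathlib

section
/- (Proposition 2.) Suppose ψ : ℝ → ℝ is convex on [0,1] (in particular, linear functions qualify). Fix π₀ with 0 < π₀ < 1. Then ΔΦ(σ,π₀) is strictly increasing in σ on (0,1/4]: for all σ, σ' with 0 < σ < σ' ≤ 1/4, ΔΦ(σ,π₀) < ΔΦ(σ',π₀). -/
/-!
Write `F u = (1/2 + 2uπ₀) * ψ ((1 + 4u)π₀ / (1 + 4uπ₀))`. The expected reputation payoff is
`F σ + F (-σ)`. Since `(1/2 + 2uπ₀) * ((1 + 4u)π₀ / (1 + 4uπ₀)) = (1 + 4u)π₀ / 2`, the function `F`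
is the perspective `(w, t) ↦ w * ψ (t / w)` of the convex function `ψ` restricted to a line, so it
is convex on `[-1/4, 1/4]` (`weighted_posterior_le`). Hence the even function `F σ + F (-σ)` is
nondecreasing in `σ ≥ 0`, and the term `2σπ₀` makes the gain strictly increasing.
-/

/-- Homogeneous form of Jensen's inequality for two points: the weights need not sum to one. -/
lemma ConvexOn.add_mul_le_of_weights {s : Set ℝ} {ψ : ℝ → ℝ} (hψ : ConvexOn ℝ s ψ)
    {x y z α β : ℝ} (hx : x ∈ s) (hy : y ∈ s) (hα : 0 ≤ α) (hβ : 0 ≤ β) (hαβ : 0 < α + β)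
    (hz : (α + β) * z = α * x + β * y) :
    (α + β) * ψ z ≤ α * ψ x + β * ψ y := by
  have h := hψ.2 hx hy (div_nonneg hα hαβ.le) (div_nonneg hβ hαβ.le)
    (by rw [← add_div, div_self hαβ.ne'])
  simp only [smul_eq_mul] at h
  have hz' : α / (α + β) * x + β / (α + β) * y = z := by
    field_simp
    linarith
  rw [hz'] at h
  calc (α + β) * ψ z ≤ (α + β) * (α / (α + β) * ψ x + β / (α + β) * ψ y) :=
        mul_le_mul_of_nonneg_left h hαβ.le
    _ = α * ψ x + β * ψ y := by field_simp

/-- The posterior after a signal of signed precision `u`. -/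
noncomputable def posterior (p u : ℝ) : ℝ := (1 + 4 * u) * p / (1 + 4 * u * p)

lemma one_add_pos {p u : ℝ} (hp : 0 < p) (hp' : p < 1) (hu : -(1 / 4) ≤ u) :
    0 < 1 + 4 * u * p := by
  nlinarith [mul_nonneg hp.le (by linarith : 0 ≤ u + 1 / 4)]

lemma posterior_mem_Icc {p u : ℝ} (hp : 0 < p) (hp' : p < 1) (hu : -(1 / 4) ≤ u) :
    posterior p u ∈ Set.Icc (0 : ℝ) 1 := by
  have hw := one_add_pos hp hp' hu
  refine ⟨div_nonneg (mul_nonneg (by linarith) hp.le) hw.le, ?_⟩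
  rw [posterior, div_le_one hw]
  linarith

/-- The posteriors average back to the prior; the weighted posterior is affine in `u`. -/
lemma weight_mul_posterior {p u : ℝ} (hp : 0 < p) (hp' : p < 1) (hu : -(1 / 4) ≤ u) :
    (1 / 2 + 2 * u * p) * posterior p u = (1 + 4 * u) * p / 2 := by
  have hw := (one_add_pos hp hp' hu).ne'
  rw [posterior, show 1 / 2 + 2 * u * p = (1 + 4 * u * p) / 2 by ring]
  field_simp

/-- Convexity of `u ↦ (1/2 + 2up) * ψ (posterior p u)` along the segment from `-r` to `r`:
the weights `l` and `m` express `u` as the convex combination `l * r + m * (-r)`. -/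
lemma weighted_posterior_le {ψ : ℝ → ℝ} (hψ : ConvexOn ℝ (Set.Icc (0 : ℝ) 1) ψ) {p u r l m : ℝ}
    (hp : 0 < p) (hp' : p < 1) (hr : -(1 / 4) ≤ r) (hr' : r ≤ 1 / 4) (hu : -(1 / 4) ≤ u)
    (hl : 0 ≤ l) (hm : 0 ≤ m) (hlm : l + m = 1) (hlu : l * r - m * r = u) :
    (1 / 2 + 2 * u * p) * ψ (posterior p u) ≤
      l * ((1 / 2 + 2 * r * p) * ψ (posterior p r)) +
        m * ((1 / 2 + 2 * (-r) * p) * ψ (posterior p (-r))) := by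
  have hr₁ : -(1 / 4) ≤ -r := by linarith
  have w := one_add_pos hp hp' hu
  have w₁ := one_add_pos hp hp' hr
  have w₂ := one_add_pos hp hp' hr₁
  have hsum : l * (1 / 2 + 2 * r * p) + m * (1 / 2 + 2 * (-r) * p) = 1 / 2 + 2 * u * p := by
    linear_combination (1 / 2) * hlm + 2 * p * hlu
  have key := hψ.add_mul_le_of_weights (z := posterior p u)
    (posterior_mem_Icc hp hp' hr) (posterior_mem_Icc hp hp' hr₁)
    (mul_nonneg hl (by linarith : 0 ≤ 1 / 2 + 2 * r * p))
    (mul_nonneg hm (by linarith : 0 ≤ 1 / 2 + 2 * (-r) * p))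
    (by rw [hsum]; linarith)
    (by
      rw [hsum]
      linear_combination weight_mul_posterior hp hp' hu - l * weight_mul_posterior hp hp' hr
        - m * weight_mul_posterior hp hp' hr₁ - p / 2 * hlm - 2 * p * hlu)
  rw [hsum] at key
  linarith

/-- Proposition 2: if ψ is convex on [0,1] then the gain in expected payoff
from choosing the complex rule, ΔΦ(σ,π₀), is strictly increasing in σ. -/
theorem gain_increasing_in_sigma_of_convex (ψ : ℝ → ℝ)
    (hψ : ConvexOn ℝ (Set.Icc (0:ℝ) 1) ψ) (π₀ : ℝ) (hπ : 0 < π₀) (hπ' : π₀ < 1)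
    (σ σ' : ℝ) (hσ : 0 < σ) (hσσ' : σ < σ') (hσ' : σ' ≤ 1/4) :
    2*σ*π₀
      + ((1/2 + 2*σ*π₀) * ψ ((1 + 4*σ)*π₀ / (1 + 4*σ*π₀))
        + (1/2 - 2*σ*π₀) * ψ ((1 - 4*σ)*π₀ / (1 - 4*σ*π₀)))
      - ψ π₀
    < 2*σ'*π₀
      + ((1/2 + 2*σ'*π₀) * ψ ((1 + 4*σ')*π₀ / (1 + 4*σ'*π₀))
        + (1/2 - 2*σ'*π₀) * ψ ((1 - 4*σ')*π₀ / (1 - 4*σ'*π₀)))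
      - ψ π₀ := by
  have hr : 0 < σ' := hσ.trans hσσ'
  have hl : 0 ≤ (σ' + σ) / (2 * σ') := by positivity
  have hm : 0 ≤ (σ' - σ) / (2 * σ') := div_nonneg (by linarith) (by linarith)
  have hlm : (σ' + σ) / (2 * σ') + (σ' - σ) / (2 * σ') = 1 := by field_simp; ring
  have hlu : (σ' + σ) / (2 * σ') * σ' - (σ' - σ) / (2 * σ') * σ' = σ := by field_simp; ring
  generalize (σ' + σ) / (2 * σ') = l at hl hlm hlu
  generalize (σ' - σ) / (2 * σ') = m at hm hlm hlu
  have h₁ := weighted_posterior_le hψ hπ hπ' (by linarith) hσ' (by linarith) hl hm hlm hlu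
  -- Swapping the two weights represents `-σ` instead of `σ`.
  have h₂ := weighted_posterior_le (u := -σ) hψ hπ hπ' (by linarith) hσ' (by linarith) hm hl
    (by linarith) (by linarith)
  have hneg (u : ℝ) : (1 / 2 + 2 * (-u) * π₀) * ψ (posterior π₀ (-u)) =
      (1 / 2 - 2 * u * π₀) * ψ ((1 - 4 * u) * π₀ / (1 - 4 * u * π₀)) := by
    simp only [posterior, mul_neg, neg_mul, ← sub_eq_add_neg]
  rw [hneg] at h₁ h₂
  rw [hneg] at h₂
  simp only [posterior] at h₁ h₂
  have hlin : σ * π₀ < σ' * π₀ := mul_lt_mul_of_pos_right hσσ' hπ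
  -- The total coefficient of each endpoint term in `h₁ + h₂` is `l + m = 1`.
  obtain rfl : m = 1 - l := by linarith
  linarith
end

section
/- (Reputational cost under concavity.) If ψ : ℝ → ℝ is concave on [0,1], then the expected reputation payoff from the complex rule is at most the reputation payoff from the simple rule: (1/2 + 2σπ₀)·ψ(π₁(1)) + (1/2 − 2σπ₀)·ψ(π₁(0)) ≤ ψ(π₀), for all real σ, π₀ with 0 < σ ≤ 1/4 and 0 < π₀ < 1. -/
/-!
This is Jensen's inequality for a two-point distribution: the posteriors lie in `[0, 1]`, their
probabilities sum to one, and by Bayes' rule their mean is the prior `π₀`.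
-/

/-- Reputational cost under concavity: if ψ is concave on [0,1], the expected
reputation payoff from the complex rule is at most that from the simple rule. -/
theorem reputational_cost_of_concave (ψ : ℝ → ℝ)
    (hψ : ConcaveOn ℝ (Set.Icc (0:ℝ) 1) ψ) (σ π₀ : ℝ) (hσ : 0 < σ)
    (hσ' : σ ≤ 1/4) (hπ : 0 < π₀) (hπ' : π₀ < 1) :
    (1/2 + 2*σ*π₀) * ψ ((1 + 4*σ)*π₀ / (1 + 4*σ*π₀))
      + (1/2 - 2*σ*π₀) * ψ ((1 - 4*σ)*π₀ / (1 - 4*σ*π₀)) ≤ ψ π₀ := by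
  have hp : 0 < σ * π₀ := mul_pos hσ hπ
  have hlt : 4 * σ * π₀ < 1 := by nlinarith
  have h1 : 0 < 1 + 4 * σ * π₀ := by linarith
  have h2 : 0 < 1 - 4 * σ * π₀ := by linarith
  have m1 : (1 + 4*σ)*π₀ / (1 + 4*σ*π₀) ∈ Set.Icc (0:ℝ) 1 :=
    ⟨by positivity, by rw [div_le_one h1]; linarith⟩
  have m2 : (1 - 4*σ)*π₀ / (1 - 4*σ*π₀) ∈ Set.Icc (0:ℝ) 1 :=
    ⟨div_nonneg (mul_nonneg (by linarith) hπ.le) h2.le,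
      by rw [div_le_one h2]; linarith⟩
  -- Beliefs form a martingale: the mean of the posteriors is the prior.
  have hmean : (1/2 + 2*σ*π₀) * ((1 + 4*σ)*π₀ / (1 + 4*σ*π₀))
      + (1/2 - 2*σ*π₀) * ((1 - 4*σ)*π₀ / (1 - 4*σ*π₀)) = π₀ := by
    have e1 : (1/2 + 2*σ*π₀) * ((1 + 4*σ)*π₀ / (1 + 4*σ*π₀)) = (1 + 4*σ)*π₀ / 2 := by
      rw [mul_div_assoc', div_eq_div_iff h1.ne' two_ne_zero]; ring
    have e2 : (1/2 - 2*σ*π₀) * ((1 - 4*σ)*π₀ / (1 - 4*σ*π₀)) = (1 - 4*σ)*π₀ / 2 := by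
      rw [mul_div_assoc', div_eq_div_iff h2.ne' two_ne_zero]; ring
    rw [e1, e2]; ring
  have key := hψ.2 m1 m2
    (show 0 ≤ 1/2 + 2*σ*π₀ by linarith) (show 0 ≤ 1/2 - 2*σ*π₀ by linarith) (by ring)
  simp only [smul_eq_mul] at key
  rwa [hmean] at key
end

section
/- (Lemma 2, expected reputation payoff with a wage.) Let σ, π₀, π* be real with 0 < σ ≤ 1/4, 0 < π₀ < 1, 0 < π* < 1, let w > 0, and let ψ(π) := w if π ≥ π* and ψ(π) := 0 otherwise. Define π̲ := π*/(1 + 4σ(1−π*)) and π̄ := π*/(1 − 4σ(1−π*)). Then the expected reputation payoff from the complex rule Ψ(σ,π₀) := (1/2 + 2σπ₀)·ψ(π₁(1)) + (1/2 − 2σπ₀)·ψ(π₁(0)) satisfies: Ψ(σ,π₀) = 0 if π₀ < π̲; Ψ(σ,π₀) = (1/2 + 2σπ₀)·w if π̲ ≤ π₀ < π̄; and Ψ(σ,π₀) = w if π₀ ≥ π̄. -/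
/-!
By Bayes' rule the posterior after signal `1` (resp. `0`) is `(1 + t) p / (1 + t p)` with
`t = 4σ` (resp. `t = -4σ`). Clearing denominators, this posterior reaches `s` exactly when the
prior `p` reaches `s / (1 + t (1 - s))` (`le_posterior_iff`). So `π̲` and `π̄` are the priors at
which the good and the bad signal, respectively, just leave the expert employed; since
`π̲ ≤ π̄`, the three cases are: never employed, employed after signal `1` only, always employed.
-/

/-- The posterior for signal informativeness `t` reaches `s` iff the prior `p` reaches the
corresponding cutoff; negative `t` describes the bad signal. -/
lemma le_posterior_iff {s p t : ℝ} (hp : 0 < 1 + t * p) (hs : 0 < 1 + t * (1 - s)) :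
    s ≤ (1 + t) * p / (1 + t * p) ↔ s / (1 + t * (1 - s)) ≤ p := by
  rw [le_div_iff₀ hp, div_le_iff₀ hs]
  constructor <;> intro h <;> linarith

/-- Lemma 2 (expected reputation payoff with a wage): the expected reputation
payoff from the complex rule is 0 below π̲, (1/2 + 2σπ₀)·w between π̲ and π̄,
and w above π̄. -/
theorem expected_wage_payoff_complex (σ π₀ πs w : ℝ) (hσ : 0 < σ)
    (hσ' : σ ≤ 1/4) (hπ : 0 < π₀) (hπ' : π₀ < 1) (hπs : 0 < πs) (hπs' : πs < 1)
    (hw : 0 < w) (ψ : ℝ → ℝ) (hψ : ψ = fun π => if π ≥ πs then w else 0) :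
    (π₀ < πs / (1 + 4*σ*(1 - πs)) →
        (1/2 + 2*σ*π₀) * ψ ((1 + 4*σ)*π₀ / (1 + 4*σ*π₀))
          + (1/2 - 2*σ*π₀) * ψ ((1 - 4*σ)*π₀ / (1 - 4*σ*π₀)) = 0)
    ∧ (πs / (1 + 4*σ*(1 - πs)) ≤ π₀ → π₀ < πs / (1 - 4*σ*(1 - πs)) →
        (1/2 + 2*σ*π₀) * ψ ((1 + 4*σ)*π₀ / (1 + 4*σ*π₀))
          + (1/2 - 2*σ*π₀) * ψ ((1 - 4*σ)*π₀ / (1 - 4*σ*π₀)) = (1/2 + 2*σ*π₀) * w)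
    ∧ (πs / (1 - 4*σ*(1 - πs)) ≤ π₀ →
        (1/2 + 2*σ*π₀) * ψ ((1 + 4*σ)*π₀ / (1 + 4*σ*π₀))
          + (1/2 - 2*σ*π₀) * ψ ((1 - 4*σ)*π₀ / (1 - 4*σ*π₀)) = w) := by
  have hp1 : 0 < 4 * σ * π₀ := by positivity
  have hs1 : 0 < 4 * σ * (1 - πs) := mul_pos (by positivity) (by linarith)
  -- Both products are below `1` because `4σ ≤ 1`, so no denominator vanishes, even at `σ = 1/4`.
  have hp2 : 4 * σ * π₀ < 1 := by nlinarith
  have hs2 : 4 * σ * (1 - πs) < 1 := by nlinarith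
  have good : πs ≤ (1 + 4*σ)*π₀ / (1 + 4*σ*π₀) ↔ πs / (1 + 4*σ*(1 - πs)) ≤ π₀ :=
    le_posterior_iff (by linarith) (by linarith)
  have bad : πs ≤ (1 - 4*σ)*π₀ / (1 - 4*σ*π₀) ↔ πs / (1 - 4*σ*(1 - πs)) ≤ π₀ := by
    have h := le_posterior_iff (s := πs) (p := π₀) (t := -(4*σ)) (by linarith) (by linarith)
    simpa only [neg_mul, ← sub_eq_add_neg] using h
  have cutoffs : πs / (1 + 4*σ*(1 - πs)) ≤ πs / (1 - 4*σ*(1 - πs)) :=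
    div_le_div_of_nonneg_left hπs.le (by linarith) (by linarith)
  simp only [hψ, ge_iff_le, good, bad]
  refine ⟨fun h => ?_, fun h₁ h₂ => ?_, fun h => ?_⟩
  · rw [if_neg h.not_ge, if_neg (h.trans_le cutoffs).not_ge]
    ring
  · rw [if_pos h₁, if_neg h₂.not_ge]
    ring
  · rw [if_pos (cutoffs.trans h), if_pos h]
    ring
end

section
/- (Corollary 4.) Let σ, π₀, w be real with 0 < σ ≤ 1/4, 0 < π₀ < 1, and w > 0, and let ψ(π) := w if π ≥ π₀ and ψ(π) := 0 otherwise (i.e., the replacement threshold equals the prior, π* = π₀). Then ΔΦ(σ,π₀) ≥ 0 (the expert chooses the complex rule) if and only if w ≤ 4σπ₀/(1 − 4σπ₀). -/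
/-!
A success moves the posterior strictly above the prior and a failure moves it strictly below,
since `p = σπ₀` satisfies `0 < 4p < 1` and `π₀ < 1`. With the threshold at the prior, the wage is
therefore kept under the simple rule and after a success, and lost after a failure. The gain is
`2p - (1/2 - 2p) w`, which is nonnegative exactly when `w ≤ 4p / (1 - 4p)`.
-/


/-- Corollary 4: when the replacement threshold equals the prior, the expert
chooses the complex rule iff the wage is at most 4σπ₀/(1 − 4σπ₀). -/
theorem complex_rule_iff_wage_bound (σ π₀ w : ℝ) (hσ : 0 < σ) (hσ' : σ ≤ 1/4)
    (hπ : 0 < π₀) (hπ' : π₀ < 1) (hw : 0 < w) (ψ : ℝ → ℝ)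
    (hψ : ψ = fun π => if π ≥ π₀ then w else 0) :
    (0 ≤ 2*σ*π₀
        + ((1/2 + 2*σ*π₀) * ψ ((1 + 4*σ)*π₀ / (1 + 4*σ*π₀))
          + (1/2 - 2*σ*π₀) * ψ ((1 - 4*σ)*π₀ / (1 - 4*σ*π₀)))
        - ψ π₀)
      ↔ w ≤ 4*σ*π₀ / (1 - 4*σ*π₀) := by
  have hp : 0 < σ * π₀ := mul_pos hσ hπ
  have hden : 0 < 1 - 4*σ*π₀ := by nlinarith
  have hgap : 0 < σ * π₀ * (1 - π₀) := mul_pos hp (by linarith)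
  have hup : (1 + 4*σ)*π₀ / (1 + 4*σ*π₀) ≥ π₀ := by
    rw [ge_iff_le, le_div_iff₀ (by nlinarith)]
    nlinarith
  have hdown : ¬ (1 - 4*σ)*π₀ / (1 - 4*σ*π₀) ≥ π₀ := by
    rw [ge_iff_le, not_le, div_lt_iff₀ hden]
    nlinarith
  subst hψ
  simp only [if_pos hup, if_neg hdown, ge_iff_le, le_refl, if_true]
  rw [le_div_iff₀ hden]
  constructor <;> intro h <;> nlinarith
end

section
/- (Proposition 6.) Let θ ∈ {0,1} and σ, ε be real numbers with 0 ≤ ε ≤ 1/2. Let f : Bool → Bool → Bool → ℝ be the joint probability mass function of a triple (A, X, X̂) of {0,1}-valued random variables: f is nonnegative and its total sum is 1. Assume: (i) the marginal of A satisfies ∑_{x,x̂} f(true, x, x̂) = 1/2; (ii) the covariance of A and X satisfies ∑_{x̂} f(true, true, x̂) − (1/2)·∑_{a,x̂} f(a, true, x̂) = θ·σ; (iii) A and X̂ are conditionally independent given X: for all a, x, x̂, f(a, x, x̂)·(∑_{a',x̂'} f(a', x, x̂')) = (∑_{x̂'} f(a, x, x̂'))·(∑_{a'} f(a', x, x̂));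 (iv) the conditional error rate is ε: for each x, ∑_a f(a, x, ¬x) = ε·∑_{a,x̂} f(a, x, x̂). Then the probability that A = X̂ satisfies ∑_x ( f(true, x, true) + f(false, x, false) ) = 1/2 + 2θ(1−2ε)σ. -/
/-!
By conditional independence, the error rate given `X = x` is also the error rate given
`A = a, X = x`, so `Pr(A = a, X = x, X̂ ≠ x) = ε * Pr(A = a, X = x)`; on a null event `X = x`
both sides vanish. Hence `Pr(A = X̂) = (1 - ε) * Pr(A = X) + ε * Pr(A ≠ X)`, and since
`Pr(A = 1) = 1/2` the covariance condition gives `Pr(A = X) = 1/2 + 2 * θ * σ`.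
-/

open Finset

/-- Proposition 6: measurement errors attenuate the complex rule's accuracy,
Pr(A = X̂) = 1/2 + 2θ(1 − 2ε)σ. Here `f a x xh` is the joint probability mass
of the event (A = a, X = x, X̂ = xh). -/
theorem measurement_error_accuracy (θ σ ε : ℝ) (hθ : θ = 0 ∨ θ = 1)
    (hε : 0 ≤ ε) (hε' : ε ≤ 1/2) (f : Bool → Bool → Bool → ℝ)
    (hf_nonneg : ∀ a x xh, 0 ≤ f a x xh)
    (hf_total : ∑ a : Bool, ∑ x : Bool, ∑ xh : Bool, f a x xh = 1)
    (hA : ∑ x : Bool, ∑ xh : Bool, f true x xh = 1/2)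
    (hcov : (∑ xh : Bool, f true true xh)
        - (1/2) * (∑ a : Bool, ∑ xh : Bool, f a true xh) = θ * σ)
    (hcondindep : ∀ a x xh,
        f a x xh * (∑ a' : Bool, ∑ xh' : Bool, f a' x xh')
          = (∑ xh' : Bool, f a x xh') * (∑ a' : Bool, f a' x xh))
    (herr : ∀ x : Bool, ∑ a : Bool, f a x (!x)
        = ε * ∑ a : Bool, ∑ xh : Bool, f a x xh) :
    ∑ x : Bool, (f true x true + f false x false) = 1/2 + 2*θ*(1 - 2*ε)*σ := by
  have h : ∀ a x, f a x (!x) = ε * ∑ xh : Bool, f a x xh := by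
    intro a x
    by_cases hx : (∑ a' : Bool, ∑ xh' : Bool, f a' x xh') = 0
    · -- On a null event `X = x`, nonnegativity forces every mass to be zero.
      have hz : ∀ xh, f a x xh = 0 := by
        intro xh
        simp only [Fintype.sum_bool] at hx
        have h1 := hf_nonneg true x true
        have h2 := hf_nonneg true x false
        have h3 := hf_nonneg false x true
        have h4 := hf_nonneg false x false
        cases a <;> cases xh <;> linarith
      simp [hz]
    · apply mul_right_cancel₀ hx
      rw [hcondindep, herr]
      ring
  have htt := h true true
  have htf := h true false
  have hft := h false true
  have hff := h false false
  simp only [Fintype.sum_bool, Bool.not_true, Bool.not_false] at *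
  -- `hf_total - hA + 2 * hcov` is `Pr(A = X) = 1/2 + 2 * θ * σ`.
  linear_combination -htt + hft + htf - hff + ε * hf_total
    + (1 - 2 * ε) * (hf_total - hA + 2 * hcov)
end

section
/- (Lemma 6, expected reputation payoff from the complex rule under mixing.) Let σ, π₀, w be real with 0 < σ < 1/4, 0 < π₀ < 1, and w > 0, let θ ∈ {0,1}, and let p₀, p₁ ∈ [0,1] with D := p₁π₀ + p₀(1−π₀) > 0. Define π_C := p₁π₀ / D and ψ(π) := w if π ≥ π₀ and ψ(π) := 0 otherwise. Then the type-θ expert's expected reputation payoff from the complex rule, (1/2 + 2σθ)·ψ((1+4σ)π_C/(1+4σπ_C)) + (1/2 − 2σθ)·ψ((1−4σ)π_C/(1−4σπ_C)), equals: 0 if p₁(1+4σ) < p₀; (1/2 + 2σθ)·w if p₁(1−4σ) < p₀ ≤ p₁(1+4σ); and w if p₀ ≤ p₁(1−4σ). -/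
/-!
The posterior after an outcome with likelihood ratio `1 + a` (`a = 4σ` if correct, `a = -4σ` if
incorrect) is, after clearing `D = p₁π₀ + p₀(1 - π₀)`,
`(1 + a)p₁π₀ / ((1 + a)p₁π₀ + p₀(1 - π₀))`. Comparing it with the prior `π₀`, the common factor
`π₀(1 - π₀) > 0` cancels and the comparison is that of the likelihood `p₁(1 + a)` with `p₀`.
So each of the two values of `ψ` is decided by one threshold on `p₀`, and the thresholds
`p₁(1 - 4σ) ≤ p₁(1 + 4σ)` separate the three cases.
-/

/-- Bayes' rule in odds form: the posterior is at least the prior exactly when the competent type's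
likelihood `p₁ (1 + a)` is at least the incompetent type's likelihood `p₀`. -/
lemma prior_le_posterior_iff {π₀ p₀ p₁ a : ℝ} (hπ : 0 < π₀) (hπ' : π₀ < 1)
    (hp₀ : 0 ≤ p₀) (hp₁ : 0 ≤ p₁) (hD : 0 < p₁*π₀ + p₀*(1 - π₀)) (ha : -1 < a) :
    π₀ ≤ (1 + a)*(p₁*π₀ / (p₁*π₀ + p₀*(1 - π₀)))
        / (1 + a*(p₁*π₀ / (p₁*π₀ + p₀*(1 - π₀)))) ↔ p₀ ≤ p₁*(1 + a) := by
  have hq : 0 < 1 - π₀ := by linarith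
  have hE : 0 < (1 + a)*(p₁*π₀) + p₀*(1 - π₀) := by
    have h1 : 0 ≤ p₁*π₀ := by positivity
    have h2 : 0 ≤ p₀*(1 - π₀) := by positivity
    rcases h1.eq_or_lt with h | h
    · rw [← h] at hD ⊢
      linarith
    · have : 0 < (1 + a)*(p₁*π₀) := mul_pos (by linarith) h
      linarith
  have hpost : (1 + a)*(p₁*π₀ / (p₁*π₀ + p₀*(1 - π₀)))
      / (1 + a*(p₁*π₀ / (p₁*π₀ + p₀*(1 - π₀))))
      = (1 + a)*(p₁*π₀) / ((1 + a)*(p₁*π₀) + p₀*(1 - π₀)) := by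
    have hden : 1 + a*(p₁*π₀ / (p₁*π₀ + p₀*(1 - π₀)))
        = ((1 + a)*(p₁*π₀) + p₀*(1 - π₀)) / (p₁*π₀ + p₀*(1 - π₀)) := by
      rw [eq_div_iff hD.ne', add_mul, mul_assoc, div_mul_cancel₀ _ hD.ne']
      ring
    rw [hden, ← mul_div_assoc, div_div_div_cancel_right₀ hD.ne']
  rw [hpost, le_div_iff₀ hE, ← mul_le_mul_iff_right₀ (mul_pos hπ hq) (b := p₀)]
  constructor <;> intro h <;> linarith

/-- Lemma 6 (expected reputation payoff from the complex rule under mixing):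
the type-θ expert's expected reputation payoff from the complex rule takes
three values depending on the mixing probabilities. -/
theorem mixing_expected_wage_payoff (σ π₀ w θ : ℝ) (hσ : 0 < σ)
    (hσ' : σ < 1/4) (hπ : 0 < π₀) (hπ' : π₀ < 1) (hw : 0 < w)
    (hθ : θ = 0 ∨ θ = 1) (p₀ p₁ : ℝ) (hp₀ : p₀ ∈ Set.Icc (0:ℝ) 1)
    (hp₁ : p₁ ∈ Set.Icc (0:ℝ) 1) (hD : 0 < p₁*π₀ + p₀*(1 - π₀))
    (πC : ℝ) (hπC : πC = p₁*π₀ / (p₁*π₀ + p₀*(1 - π₀)))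
    (ψ : ℝ → ℝ) (hψ : ψ = fun π => if π ≥ π₀ then w else 0) :
    (p₁*(1 + 4*σ) < p₀ →
        (1/2 + 2*σ*θ) * ψ ((1 + 4*σ)*πC / (1 + 4*σ*πC))
          + (1/2 - 2*σ*θ) * ψ ((1 - 4*σ)*πC / (1 - 4*σ*πC)) = 0)
    ∧ (p₁*(1 - 4*σ) < p₀ → p₀ ≤ p₁*(1 + 4*σ) →
        (1/2 + 2*σ*θ) * ψ ((1 + 4*σ)*πC / (1 + 4*σ*πC))
          + (1/2 - 2*σ*θ) * ψ ((1 - 4*σ)*πC / (1 - 4*σ*πC)) = (1/2 + 2*σ*θ) * w)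
    ∧ (p₀ ≤ p₁*(1 - 4*σ) →
        (1/2 + 2*σ*θ) * ψ ((1 + 4*σ)*πC / (1 + 4*σ*πC))
          + (1/2 - 2*σ*θ) * ψ ((1 - 4*σ)*πC / (1 - 4*σ*πC)) = w) := by
  subst hπC hψ
  have hplus := prior_le_posterior_iff hπ hπ' hp₀.1 hp₁.1 hD (a := 4*σ) (by linarith)
  have hminus := prior_le_posterior_iff hπ hπ' hp₀.1 hp₁.1 hD (a := -(4*σ)) (by linarith)
  simp only [neg_mul, ← sub_eq_add_neg] at hminus
  have hle : p₁*(1 - 4*σ) ≤ p₁*(1 + 4*σ) :=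
    mul_le_mul_of_nonneg_left (by linarith) hp₁.1
  simp only [ge_iff_le, hplus, hminus]
  refine ⟨fun h => ?_, fun h h' => ?_, fun h => ?_⟩
  · rw [if_neg (not_le.2 h), if_neg (not_le.2 (hle.trans_lt h))]
    ring
  · rw [if_pos h', if_neg (not_le.2 h)]
    ring
  · rw [if_pos (h.trans hle), if_pos h]
    ring
end
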